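/- arXiv:2506.05528 — 3 statements merged into one kernel-verified Lean document; each statement's English description precedes it below -/
import Mathlib

section
/- Let n be a positive integer. For each I ⊆ {1,…,n−1} let Y_I = Σ_{σ : R(σ)=I} σ in the rational group algebra ℚ[S_n]. Then for all I, J ⊆ {1,…,n−1} there exist nonnegative integers a_{IJK}, indexed by subsets K ⊆ {1,…,n−1}, such that Y_I · Y_J = Σ_K a_{IJK} Y_K. Consequently the linear span of the elements Y_I is a subalgebra of ℚ[S_n]. -/
/-!
Indexing convention: positions of a permutation `σ ∈ S_n` are `0,…,n-1` (the element
`⟨i,_⟩ : Fin n` corresponds to the paper's 1-based position `i+1`).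
-/

/-- The recoil set of a permutation: the descent set of its inverse. -/
def recoilSet {n : ℕ} (σ : Equiv.Perm (Fin n)) : Finset (Fin n) :=
  Finset.univ.filter fun i => ∃ h : (i : ℕ) + 1 < n, σ⁻¹ ⟨(i : ℕ) + 1, h⟩ < σ⁻¹ i

/-- `Y_I`: the sum, in the group algebra `ℚ[S_n]`, of all permutations with recoil set `I`. -/
noncomputable def Y (n : ℕ) (I : Finset (Fin n)) : MonoidAlgebra ℚ (Equiv.Perm (Fin n)) :=
  ∑ σ ∈ Finset.univ.filter (fun σ => recoilSet σ = I),
    MonoidAlgebra.of ℚ (Equiv.Perm (Fin n)) σ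

/-!
Call two elements of `Fin n` adjacent if they differ by one. Multiplying `π` on the right by the
transposition of adjacent positions `a`, `b` preserves its recoil set as soon as the values `π a`
and `π b` are not adjacent, and bubble sort shows that any two permutations with the same recoil set
are linked by such moves. The coefficient of `π` in `Y_I * Y_J` is the number of factorizations
`π = σ * τ` with `R(σ) = I` and `R(τ) = J`, so it suffices that this number is invariant under a
move `π ↦ π * s` with `s = swap a b`. If `τ a` and `τ b` are not adjacent, then `τ ↦ τ * s` is a
move that leaves `σ` fixed; otherwise `τ` is kept and `σ ↦ σ * swap (τ a) (τ b)` is a move.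
-/

open Equiv Finset SimpleGraph

section General

/-- The elements `τ` of `T` that occur as the right factor of a factorization `π = σ * τ` with
`σ ∈ S`; the left factor is determined by `τ`. -/
def rightFactors {G : Type*} [Group G] [DecidableEq G] (S T : Finset G) (π : G) : Finset G :=
  {τ ∈ T | π * τ⁻¹ ∈ S}

theorem sum_map_mul_sum_map {G A : Type*} [Group G] [Fintype G] [DecidableEq G]
    [NonAssocSemiring A] (φ : G →* A) (S T : Finset G) :
    (∑ σ ∈ S, φ σ) * ∑ τ ∈ T, φ τ = ∑ π, #(rightFactors S T π) • φ π := by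
  have sum_left_factors (τ : G) : ∑ σ ∈ S, φ (σ * τ) = ∑ π, if π * τ⁻¹ ∈ S then φ π else 0 := by
    rw [← Equiv.sum_comp (Equiv.mulRight τ)]
    simp
  calc (∑ σ ∈ S, φ σ) * ∑ τ ∈ T, φ τ
      = ∑ τ ∈ T, ∑ σ ∈ S, φ (σ * τ) := by
        rw [sum_mul_sum, sum_comm]
        simp only [map_mul]
    _ = ∑ π, ∑ τ ∈ T, if π * τ⁻¹ ∈ S then φ π else 0 := by
        simp only [sum_left_factors]
        exact sum_comm
    _ = ∑ π, #(rightFactors S T π) • φ π := by simp only [← sum_filter, sum_const, rightFactors]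

theorem sum_smul_eq_sum_extend_smul {α β R M : Type*} [Fintype α] [Fintype β] [DecidableEq β]
    [Zero R] [AddCommMonoid M] [DistribSMul R M] {f : α → β} {c : α → R}
    (hc : c.FactorsThrough f) (v : α → M) :
    ∑ a, c a • v a = ∑ b, Function.extend f c 0 b • ∑ a with f a = b, v a := by
  rw [← sum_fiberwise univ f]
  refine sum_congr rfl fun b _ ↦ ?_
  rw [smul_sum]
  refine sum_congr rfl fun a ha ↦ ?_
  rw [← (mem_filter.mp ha).2, hc.extend_apply]

theorem mul_mem_span_of_forall_mul_mem_span {R A : Type*} [CommSemiring R] [Semiring A]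
    [Algebra R A] {s : Set A} (hs : ∀ x ∈ s, ∀ y ∈ s, x * y ∈ Submodule.span R s) {x y : A}
    (hx : x ∈ Submodule.span R s) (hy : y ∈ Submodule.span R s) : x * y ∈ Submodule.span R s := by
  have span_mul_span_le : Submodule.span R s * Submodule.span R s ≤ Submodule.span R s := by
    rw [Submodule.span_mul_span, Submodule.span_le]
    exact Set.mul_subset_iff.mpr hs
  exact span_mul_span_le (Submodule.mul_mem_mul hx hy)

end General

section LinearOrder

variable {α : Type*} [LinearOrder α]

theorem swap_apply_lt_swap_apply_iff_of_covBy {a b p q : α} (hab : a ⋖ b)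
    (h : s(p, q) ≠ s(a, b)) : swap a b p < swap a b q ↔ p < q := by
  have hlt : a < b := hab.lt
  have hp : p ≤ a ↔ p < b := hab.le_iff_lt_left
  have hq : q ≤ a ↔ q < b := hab.le_iff_lt_left
  simp only [ne_eq, Sym2.eq_iff, not_or, not_and] at h
  simp only [swap_apply_def]
  grind

theorem swap_apply_lt_swap_apply_iff {a b p q : α} (hab : (hasse α).Adj a b)
    (h : s(p, q) ≠ s(a, b)) : swap a b p < swap a b q ↔ p < q := by
  rcases hasse_adj.mp hab with hab | hba
  · exact swap_apply_lt_swap_apply_iff_of_covBy hab h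
  · rw [swap_comm]
    exact swap_apply_lt_swap_apply_iff_of_covBy hba (Sym2.eq_swap (a := a) ▸ h)

theorem perm_eq_one_of_strictMono [WellFoundedLT α] {g : Perm α} (hg : StrictMono g) : g = 1 := by
  have : hg.orderIsoOfSurjective g g.surjective = OrderIso.refl α := Subsingleton.elim _ _
  exact Equiv.ext fun x ↦ DFunLike.congr_fun this x

variable [Finite α]

theorem exists_covBy_apply_lt_of_ne_one {g : Perm α} (hg : g ≠ 1) :
    ∃ a b, a ⋖ b ∧ g b < g a := by
  have := Fintype.ofFinite α
  let := Fintype.toLocallyFiniteOrder (α := α)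
  contrapose! hg
  refine perm_eq_one_of_strictMono ((strictMono_iff_forall_covBy g).mpr fun a b hab ↦ ?_)
  exact (hg a b hab).lt_of_ne (g.injective.ne hab.ne)

/-- Bubble sort: removing a descent by an adjacent swap makes a permutation lexicographically
smaller. -/
theorem perm_bubbleSort_induction {motive : Perm α → Prop} (one : motive 1)
    (descent : ∀ g a b, a ⋖ b → g b < g a → motive (g * swap a b) → motive g) (g : Perm α) :
    motive g := by
  have wf : WellFounded fun g h : Perm α ↦ toLex ⇑g < toLex ⇑h := InvImage.wf _ wellFounded_lt
  induction g using wf.induction with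
  | _ g ih =>
    by_cases hg : g = 1
    · exact hg ▸ one
    · obtain ⟨a, b, hab, hlt⟩ := exists_covBy_apply_lt_of_ne_one hg
      exact descent g a b hab hlt (ih _ (Pi.lex_desc hab.le hlt))

end LinearOrder

section Recoil

variable {n : ℕ} {π ρ : Perm (Fin n)} {a b : Fin n}

theorem mem_recoilSet : a ∈ recoilSet π ↔ ∃ b, a ⋖ b ∧ π⁻¹ b < π⁻¹ a := by
  simp only [recoilSet, mem_filter_univ, Fin.exists_iff, Fin.covBy_iff, Nat.covBy_iff_add_one_eq]
  grind

theorem mem_recoilSet_iff_of_covBy (hab : a ⋖ b) : a ∈ recoilSet π ↔ π⁻¹ b < π⁻¹ a := by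
  rw [mem_recoilSet]
  exact ⟨fun ⟨_, hac, hlt⟩ ↦ hab.unique_right hac ▸ hlt, fun hlt ↦ ⟨b, hab, hlt⟩⟩

theorem recoilSet_eq_iff : recoilSet π = recoilSet ρ ↔
    ∀ u v, (pathGraph n).Adj u v → (π⁻¹ u < π⁻¹ v ↔ ρ⁻¹ u < ρ⁻¹ v) := by
  constructor
  · rintro h u v (huv | hvu)
    · have not_lt_iff : ¬π⁻¹ v < π⁻¹ u ↔ ¬ρ⁻¹ v < ρ⁻¹ u := by
        rw [← mem_recoilSet_iff_of_covBy huv, ← mem_recoilSet_iff_of_covBy huv, h]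
      simpa only [not_lt, (π⁻¹.injective.ne huv.ne).le_iff_lt,
        (ρ⁻¹.injective.ne huv.ne).le_iff_lt] using not_lt_iff
    · rw [← mem_recoilSet_iff_of_covBy hvu, ← mem_recoilSet_iff_of_covBy hvu, h]
  · intro h
    ext u
    simp only [mem_recoilSet]
    exact exists_congr fun v ↦ and_congr_right fun huv ↦ h v u (Or.inr huv)

theorem recoilSet_mul_swap (hab : (pathGraph n).Adj a b) (h : ¬(pathGraph n).Adj (π a) (π b)) :
    recoilSet (π * swap a b) = recoilSet π := by
  refine recoilSet_eq_iff.mpr fun u v huv ↦ ?_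
  rw [mul_inv_rev, swap_inv]
  refine swap_apply_lt_swap_apply_iff hab fun huv_ab ↦ h ?_
  have : s(u, v) = s(π a, π b) := by simpa using congrArg (Sym2.map π) huv_ab
  rwa [← mem_edgeSet, ← this]

theorem not_adj_of_recoilSet_eq (h : recoilSet π = recoilSet ρ) (hab : a < b)
    (hlt : ρ⁻¹ (π b) < ρ⁻¹ (π a)) : ¬(pathGraph n).Adj (π a) (π b) := fun hadj ↦ by
  have : ρ⁻¹ (π a) < ρ⁻¹ (π b) := (recoilSet_eq_iff.mp h _ _ hadj).mp (by simpa using hab)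
  exact hlt.asymm this

theorem factorsThrough_recoilSet {β : Type*} {f : Perm (Fin n) → β}
    (hf : ∀ π a b, (pathGraph n).Adj a b → ¬(pathGraph n).Adj (π a) (π b) →
      f (π * swap a b) = f π) : f.FactorsThrough recoilSet := by
  intro π ρ hπρ
  suffices ∀ g, recoilSet (ρ * g) = recoilSet ρ → f (ρ * g) = f ρ by
    simpa [hπρ] using this (ρ⁻¹ * π)
  intro g
  induction g using perm_bubbleSort_induction with
  | one => simp
  | descent g a b hab hlt ih =>
    intro hg
    have hadj : (pathGraph n).Adj a b := Or.inl hab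
    have hnadj : ¬(pathGraph n).Adj ((ρ * g) a) ((ρ * g) b) :=
      not_adj_of_recoilSet_eq hg hab.lt (by simpa using hlt)
    rw [← mul_assoc, recoilSet_mul_swap hadj hnadj, hf _ a b hadj hnadj] at ih
    exact ih hg

open Classical in
/-- The involution matching the right factors of `π` with those of `π * swap a b`: it replaces `τ`
by `τ * swap a b`, except where this may change the recoil set of `τ`. -/
noncomputable def swapUnlessAdj (a b : Fin n) (τ : Perm (Fin n)) : Perm (Fin n) :=
  if (pathGraph n).Adj (τ a) (τ b) then τ else τ * swap a b

theorem swapUnlessAdj_involutive (a b : Fin n) : Function.Involutive (swapUnlessAdj a b) := by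
  intro τ
  by_cases h : (pathGraph n).Adj (τ a) (τ b) <;>
    simp [swapUnlessAdj, h, adj_comm, mul_assoc]

theorem recoilSet_swapUnlessAdj (hab : (pathGraph n).Adj a b) (τ : Perm (Fin n)) :
    recoilSet (swapUnlessAdj a b τ) = recoilSet τ := by
  unfold swapUnlessAdj
  split_ifs with h
  · rfl
  · exact recoilSet_mul_swap hab h

theorem recoilSet_mul_swap_mul_inv_swapUnlessAdj (h : ¬(pathGraph n).Adj (π a) (π b))
    (τ : Perm (Fin n)) :
    recoilSet (π * swap a b * (swapUnlessAdj a b τ)⁻¹) = recoilSet (π * τ⁻¹) := by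
  unfold swapUnlessAdj
  split_ifs with hτ
  · have conj : π * swap a b * τ⁻¹ = π * τ⁻¹ * swap (τ a) (τ b) := by
      rw [swap_apply_apply]; group
    rw [conj, recoilSet_mul_swap hτ (by simpa using h)]
  · simp [mul_assoc]

/-- The recoil class `𝒴_I`, so that `Y n I` is the sum of its elements. -/
def recoilClass (I : Finset (Fin n)) : Finset (Perm (Fin n)) := {σ | recoilSet σ = I}

theorem card_rightFactors_mul_swap (I J : Finset (Fin n)) (hab : (pathGraph n).Adj a b)
    (h : ¬(pathGraph n).Adj (π a) (π b)) :
    #(rightFactors (recoilClass I) (recoilClass J) (π * swap a b)) =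
      #(rightFactors (recoilClass I) (recoilClass J) π) := by
  refine (card_equiv (swapUnlessAdj_involutive a b).toPerm fun τ ↦ ?_).symm
  simp [rightFactors, recoilClass, recoilSet_swapUnlessAdj hab,
    recoilSet_mul_swap_mul_inv_swapUnlessAdj h]

theorem exists_Y_mul_Y_eq_sum (I J : Finset (Fin n)) :
    ∃ a : Finset (Fin n) → ℕ, Y n I * Y n J = ∑ K, (a K : ℚ) • Y n K := by
  let c (π : Perm (Fin n)) : ℕ := #(rightFactors (recoilClass I) (recoilClass J) π)
  have hc : c.FactorsThrough recoilSet :=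
    factorsThrough_recoilSet fun _ _ _ ↦ card_rightFactors_mul_swap I J
  refine ⟨Function.extend recoilSet c 0, ?_⟩
  simp only [Nat.cast_smul_eq_nsmul]
  exact (sum_map_mul_sum_map _ (recoilClass I) (recoilClass J)).trans
    (sum_smul_eq_sum_extend_smul hc _)

end Recoil

/-- The product of two recoil classes is a nonnegative-integer combination of recoil classes;
consequently the span of the `Y_I` is a subalgebra of `ℚ[S_n]`. -/
theorem statement3 (n : ℕ) (hn : 0 < n) :
    (∀ I J : Finset (Fin n), ∃ a : Finset (Fin n) → ℕ,
      Y n I * Y n J = ∑ K : Finset (Fin n), (a K : ℚ) • Y n K) ∧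
    (∀ x y : MonoidAlgebra ℚ (Equiv.Perm (Fin n)),
      x ∈ Submodule.span ℚ (Set.range (Y n)) → y ∈ Submodule.span ℚ (Set.range (Y n)) →
      x * y ∈ Submodule.span ℚ (Set.range (Y n))) := by
  refine ⟨exists_Y_mul_Y_eq_sum, fun x y ↦ mul_mem_span_of_forall_mul_mem_span ?_⟩
  rintro _ ⟨I, rfl⟩ _ ⟨J, rfl⟩
  obtain ⟨a, ha⟩ := exists_Y_mul_Y_eq_sum I J
  rw [ha]
  exact Submodule.sum_mem _ fun K _ ↦ Submodule.smul_mem _ _ (Submodule.subset_span ⟨K, rfl⟩)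
end

section
/- Let (W,S) be a Coxeter system with length function ℓ, let w ∈ W and s ∈ S. Then R(ws) = R(w) if and only if wsw⁻¹ ∉ S. -/
/-- The recoil set of `w`: the set of simple reflections `s` with `ℓ(sw) = ℓ(w) − 1`. -/
def coxRecoil {B W : Type*} [Group W] {M : CoxeterMatrix B} (cs : CoxeterSystem M W)
    (w : W) : Set W :=
  {s | s ∈ Set.range cs.simple ∧ cs.length (s * w) + 1 = cs.length w}

/-!
For a word `ω`, the parity of the number of times `t` occurs in the left inversion sequence of `ω`
depends only on the element `w` that `ω` represents. Indeed, this parity is the value at `t` of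
`w • 0`, where `s i` acts on functions `W → ZMod 2` by conjugating the argument and then adding
the indicator of `s i`; the braid relations hold because the left inversion sequence of
`(s i * s j) ^ M i j` runs twice through the same list. A reflection `t` is a left inversion of `w`
exactly when this parity is odd. Since a word for `w * s` is obtained from one for `w` by appending
one letter, which appends `w * s * w⁻¹` to the left inversion sequence, the left inversions of
`w * s` and `w` differ exactly by the element `w * s * w⁻¹`. Intersect with the set of simple
reflections.
-/

open CoxeterSystem
open scoped symmDiff

section

variable {B W : Type*} [Group W] {M : CoxeterMatrix B} (cs : CoxeterSystem M W)

open Classical in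
/-- The affine map by which the simple reflection `s i` acts on functions `W → ZMod 2`: conjugate
the argument by `s i` and add the indicator function of `s i`. Such functions encode subsets of `W`,
with addition as symmetric difference. -/
noncomputable def simpleTwist (i : B) : Function.End (W → ZMod 2) :=
  fun f t ↦ f (MulAut.conj (cs.simple i) t) + if t = cs.simple i then 1 else 0

open Classical in
lemma count_leftInvSeq_cons (i : B) (ω : List B) (t : W) :
    (cs.leftInvSeq (i :: ω)).count t =
      (cs.leftInvSeq ω).count (MulAut.conj (cs.simple i) t) + if t = cs.simple i then 1 else 0 := by
  have conj_conj : MulAut.conj (cs.simple i) (MulAut.conj (cs.simple i) t) = t := by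
    simp [mul_assoc]
  have count_map_conj := List.count_map_of_injective (cs.leftInvSeq ω)
    _ (MulAut.conj (cs.simple i)).injective (MulAut.conj (cs.simple i) t)
  rw [conj_conj] at count_map_conj
  simp [leftInvSeq, List.count_cons, count_map_conj, eq_comm (a := t)]

open Classical in
lemma prod_map_simpleTwist_apply (ω : List B) (f : W → ZMod 2) (t : W) :
    (ω.map (simpleTwist cs)).prod f t =
      f ((cs.wordProd ω)⁻¹ * t * cs.wordProd ω) + (cs.leftInvSeq ω).count t := by
  induction ω generalizing t with
  | nil => simp [Function.End.one_def]
  | cons i ω ih =>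
    rw [List.map_cons, List.prod_cons]
    change (ω.map (simpleTwist cs)).prod f (MulAut.conj (cs.simple i) t) +
      (if t = cs.simple i then 1 else 0) = _
    rw [ih, count_leftInvSeq_cons]
    simp [wordProd_cons, mul_assoc, add_assoc]

lemma leftInvSeq_alternatingWord (i j : B) (p : ℕ) :
    cs.leftInvSeq (alternatingWord i j (2 * p)) =
      (List.range (2 * p)).map fun k ↦ cs.simple i * (cs.simple j * cs.simple i) ^ k := by
  refine List.ext_getElem (by simp) fun k hk _ ↦ ?_
  rw [cs.getElem_leftInvSeq_alternatingWord i j p k (by simpa using hk),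
    prod_alternatingWord_eq_mul_pow]
  simp [Nat.mul_add_div]

open Classical in
lemma even_count_leftInvSeq_alternatingWord (i j : B) (t : W) :
    Even ((cs.leftInvSeq (alternatingWord i j (2 * M i j))).count t) := by
  rw [leftInvSeq_alternatingWord, two_mul, List.range_add, List.map_append, List.map_map,
    List.count_append]
  simp [Function.comp_def, pow_add]

lemma prod_map_alternatingWord {G : Type*} [Monoid G] (f : B → G) (i j : B) (p : ℕ) :
    ((alternatingWord i j (2 * p)).map f).prod = (f i * f j) ^ p := by
  induction p with
  | zero => simp [alternatingWord]
  | succ p ih => simp [mul_add, alternatingWord, ih, pow_succ]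

lemma isLiftable_simpleTwist : M.IsLiftable (simpleTwist cs) := by
  classical
  intro i j
  funext f t
  have wordProd_eq_one : cs.wordProd (alternatingWord i j (2 * M i j)) = 1 := by
    simp [prod_alternatingWord_eq_mul_pow]
  have count_eq_zero := (even_count_leftInvSeq_alternatingWord cs i j t).natCast_zmod_two
  rw [← prod_map_alternatingWord, prod_map_simpleTwist_apply, wordProd_eq_one, count_eq_zero]
  simp [Function.End.one_def]

/-- The action of `W` on functions `W → ZMod 2` in which `s i` acts by `simpleTwist cs i`. -/
noncomputable def twistHom : W →* Function.End (W → ZMod 2) :=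
  cs.lift ⟨simpleTwist cs, isLiftable_simpleTwist cs⟩

/-- The parity of the number of occurrences of `t` in the left inversion sequence of any word
for `w`. As a function of `w` it is a cocycle, defined as the translation part of `twistHom`. -/
noncomputable def inversionParity (w t : W) : ZMod 2 := twistHom cs w 0 t

lemma twistHom_wordProd (ω : List B) :
    twistHom cs (cs.wordProd ω) = (ω.map (simpleTwist cs)).prod := by
  rw [wordProd, map_list_prod, List.map_map]
  congr 2
  funext i
  exact cs.lift_apply_simple _ i

open Classical in
lemma inversionParity_wordProd (ω : List B) (t : W) :
    inversionParity cs (cs.wordProd ω) t = (cs.leftInvSeq ω).count t := by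
  simp [inversionParity, twistHom_wordProd, prod_map_simpleTwist_apply]

lemma twistHom_apply (w : W) (f : W → ZMod 2) (t : W) :
    twistHom cs w f t = f (w⁻¹ * t * w) + inversionParity cs w t := by
  classical
  obtain ⟨ω, rfl⟩ := cs.wordProd_surjective w
  rw [twistHom_wordProd, prod_map_simpleTwist_apply, inversionParity_wordProd]

lemma inversionParity_mul (v w t : W) :
    inversionParity cs (v * w) t =
      inversionParity cs w (v⁻¹ * t * v) + inversionParity cs v t := by
  rw [inversionParity, map_mul]
  exact twistHom_apply cs v (twistHom cs w 0) t

lemma inversionParity_one (t : W) : inversionParity cs 1 t = 0 := by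
  simp [inversionParity, Function.End.one_def]

lemma inversionParity_simple_self (i : B) :
    inversionParity cs (cs.simple i) (cs.simple i) = 1 := by
  classical
  simpa using inversionParity_wordProd cs [i] (cs.simple i)

open Classical in
lemma inversionParity_mul_simple (w t : W) (i : B) :
    inversionParity cs (w * cs.simple i) t =
      inversionParity cs w t + if t = w * cs.simple i * w⁻¹ then 1 else 0 := by
  obtain ⟨ω, rfl⟩ := cs.wordProd_surjective w
  have parity_concat := inversionParity_wordProd cs (ω.concat i) t
  rw [wordProd_concat, leftInvSeq_concat] at parity_concat
  rw [parity_concat, inversionParity_wordProd]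
  simp [List.count_singleton, eq_comm (a := t)]

variable {cs}

lemma inversionParity_self_of_isReflection {t : W} (ht : cs.IsReflection t) :
    inversionParity cs t t = 1 := by
  obtain ⟨u, i, rfl⟩ := ht
  set t := u * cs.simple i * u⁻¹ with ht
  have conj_eq : u⁻¹ * t * u = cs.simple i := by simp [ht, mul_assoc]
  have cancel : inversionParity cs u⁻¹ (cs.simple i) + inversionParity cs u t = 0 := by
    rw [← conj_eq, ← inversionParity_mul, mul_inv_cancel, inversionParity_one]
  calc inversionParity cs t t
      = inversionParity cs (cs.simple i * u⁻¹) (cs.simple i) + inversionParity cs u t := by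
        rw [← conj_eq, ← inversionParity_mul, conj_eq, ht, mul_assoc]
    _ = inversionParity cs u⁻¹ (cs.simple i) + 1 + inversionParity cs u t := by
        rw [inversionParity_mul, inversionParity_simple_self]
        simp
    _ = 1 := by rw [add_right_comm, cancel, zero_add]

lemma isLeftInversion_of_inversionParity_ne_zero {w t : W} (h : inversionParity cs w t ≠ 0) :
    cs.IsLeftInversion w t := by
  classical
  obtain ⟨ω, hω, rfl⟩ := cs.exists_isReduced w
  refine cs.isLeftInversion_of_mem_leftInvSeq hω ?_
  contrapose! h
  rw [inversionParity_wordProd, List.count_eq_zero_of_not_mem h, Nat.cast_zero]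

theorem isLeftInversion_iff_inversionParity_ne_zero {w t : W} :
    cs.IsLeftInversion w t ↔ inversionParity cs w t ≠ 0 := by
  refine ⟨fun hwt parity_zero ↦ ?_, isLeftInversion_of_inversionParity_ne_zero⟩
  have ht : cs.IsReflection t := hwt.1
  have parity_mul : inversionParity cs (t * w) t = 1 := by
    rw [inversionParity_mul, inversionParity_self_of_isReflection ht, inv_mul_cancel, one_mul,
      parity_zero, zero_add]
  have inversion_mul : cs.IsLeftInversion (t * w) t :=
    isLeftInversion_of_inversionParity_ne_zero (by simp [parity_mul])
  exact ht.isLeftInversion_mul_right_iff.mp inversion_mul hwt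

theorem setOf_isLeftInversion_mul_simple (w : W) (i : B) :
    {t | cs.IsLeftInversion (w * cs.simple i) t} =
      {t | cs.IsLeftInversion w t} ∆ {w * cs.simple i * w⁻¹} := by
  classical
  ext t
  have add_one_ne_zero_iff : ∀ x : ZMod 2, x + 1 ≠ 0 ↔ x = 0 := by decide
  simp only [Set.mem_symmDiff, Set.mem_ofPred_eq, Set.mem_singleton_iff,
    isLeftInversion_iff_inversionParity_ne_zero, inversionParity_mul_simple]
  split_ifs with h <;> simp [h, add_one_ne_zero_iff]

lemma coxRecoil_eq_inter (w : W) :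
    coxRecoil cs w = Set.range cs.simple ∩ {t | cs.IsLeftInversion w t} := by
  ext t
  refine and_congr_right ?_
  rintro ⟨i, rfl⟩
  rw [Set.mem_ofPred_eq, isLeftInversion_simple_iff_isLeftDescent, isLeftDescent_iff]

theorem coxRecoil_mul_simple (w : W) (i : B) :
    coxRecoil cs (w * cs.simple i) =
      coxRecoil cs w ∆ (Set.range cs.simple ∩ {w * cs.simple i * w⁻¹}) := by
  rw [coxRecoil_eq_inter, coxRecoil_eq_inter, setOf_isLeftInversion_mul_simple,
    Set.inter_symmDiff_distrib_left]

end

/-- `R(ws) = R(w)` if and only if `wsw⁻¹ ∉ S`. -/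
theorem statement9 {B W : Type*} [Group W] {M : CoxeterMatrix B} (cs : CoxeterSystem M W)
    (w s : W) (hs : s ∈ Set.range cs.simple) :
    coxRecoil cs (w * s) = coxRecoil cs w ↔ w * s * w⁻¹ ∉ Set.range cs.simple := by
  obtain ⟨i, rfl⟩ := hs
  rw [coxRecoil_mul_simple, symmDiff_eq_left, Set.bot_eq_empty, Set.inter_singleton_eq_empty]
end

section
/- Let n be a positive integer, let σ ∈ S_n and let i ∈ {1,…,n−2}. Then the six permutations σ, σs_i, σs_is_{i+1}, σs_is_{i+1}s_i, σs_{i+1}s_i, σs_{i+1} all have the same recoil set as σ if and only if |σ(i) − σ(i+1)| ≥ 2, |σ(i+1) − σ(i+2)| ≥ 2, and |σ(i) − σ(i+2)| ≥ 2. -/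
/-!
Write a value of `σ` as `σ p`, and let `σ q` be the next value. Whether `σ p` is a recoil of `σ * τ`
depends only on the relative order of `τ⁻¹ p` and `τ⁻¹ q`. If `τ` permutes the three positions
`i, i + 1, i + 2` among themselves, that order can change only when `p` and `q` both lie in this
interval. Hence the recoil set is unchanged as soon as no two of the three values are consecutive;
and since `s₁ * s₂ * s₁` reverses the interval, its fixing the recoil set already forces this.
-/

open Equiv

section FixingSubgroup

variable {α : Type*} {S : Set α}

theorem apply_mem_of_mem_fixingSubgroup_compl {τ : Perm α}
    (hτ : τ ∈ fixingSubgroup (Perm α) Sᶜ) {x : α} (hx : x ∈ S) : τ x ∈ S :=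
  orbit_fixingSubgroup_compl_subset (Perm α) α hx ⟨⟨τ, hτ⟩, rfl⟩

theorem swap_mem_fixingSubgroup_compl [DecidableEq α] {a b : α} (ha : a ∈ S) (hb : b ∈ S) :
    swap a b ∈ fixingSubgroup (Perm α) Sᶜ :=
  (mem_fixingSubgroup_iff _).2 fun _ hx =>
    swap_apply_of_ne_of_ne (ne_of_mem_of_not_mem ha hx).symm (ne_of_mem_of_not_mem hb hx).symm

end FixingSubgroup

section LinearOrder

variable {α : Type*} [LinearOrder α] {S : Set α} {a b c : α}

theorem lt_iff_lt_of_ordConnected_of_notMem [S.OrdConnected] (ha : a ∈ S) (hb : b ∈ S)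
    (hc : c ∉ S) : a < c ↔ b < c := by
  refine ⟨fun hac => ?_, fun hbc => ?_⟩ <;> by_contra! h
  · exact hc (S.Icc_subset ha hb ⟨hac.le, h⟩)
  · exact hc (S.Icc_subset hb ha ⟨hbc.le, h⟩)

theorem gt_iff_gt_of_ordConnected_of_notMem [S.OrdConnected] (ha : a ∈ S) (hb : b ∈ S)
    (hc : c ∉ S) : c < a ↔ c < b := by
  refine ⟨fun hca => ?_, fun hcb => ?_⟩ <;> by_contra! h
  · exact hc (S.Icc_subset hb ha ⟨h, hca.le⟩)
  · exact hc (S.Icc_subset ha hb ⟨h, hcb.le⟩)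

theorem apply_lt_apply_iff_of_mem_fixingSubgroup_compl [S.OrdConnected] {τ : Perm α}
    (hτ : τ ∈ fixingSubgroup (Perm α) Sᶜ) {p q : α} (hpq : ¬(p ∈ S ∧ q ∈ S)) :
    τ p < τ q ↔ p < q := by
  have fixed {x : α} (hx : x ∉ S) : τ x = x := (mem_fixingSubgroup_iff _).1 hτ x hx
  by_cases hp : p ∈ S
  · have hq : q ∉ S := fun hq => hpq ⟨hp, hq⟩
    rw [fixed hq]
    exact lt_iff_lt_of_ordConnected_of_notMem (apply_mem_of_mem_fixingSubgroup_compl hτ hp) hp hq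
  · rw [fixed hp]
    by_cases hq : q ∈ S
    · exact gt_iff_gt_of_ordConnected_of_notMem (apply_mem_of_mem_fixingSubgroup_compl hτ hq) hq hp
    · rw [fixed hq]

theorem ordConnected_triple (hab : a ⋖ b) (hbc : b ⋖ c) : ({a, b, c} : Set α).OrdConnected := by
  have triple_eq_Icc : ({a, b, c} : Set α) = Set.Icc a c := by
    rw [← Set.Icc_union_Icc_eq_Icc hab.le hbc.le, hab.Icc_eq, hbc.Icc_eq]
    grind
  exact triple_eq_Icc ▸ Set.ordConnected_Icc

theorem strictAntiOn_swap_triple (hab : a < b) (hbc : b < c) :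
    StrictAntiOn (swap a c) {a, b, c} := by
  have hb : swap a c b = b := swap_apply_of_ne_of_ne hab.ne' hbc.ne
  rintro p (rfl | rfl | rfl) q (rfl | rfl | rfl) hpq <;>
    simp only [swap_apply_left, swap_apply_right, hb] <;> order

end LinearOrder

section Recoil

variable {n : ℕ} {σ τ : Perm (Fin n)} {S : Set (Fin n)}

theorem mem_recoilSet_s13 {k : Fin n} :
    k ∈ recoilSet σ ↔ ∃ l, k ⋖ l ∧ σ⁻¹ l < σ⁻¹ k := by
  simp only [recoilSet, Finset.mem_filter, Finset.mem_univ, true_and, Fin.covBy_iff,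
    Nat.covBy_iff_add_one_eq]
  constructor
  · rintro ⟨h, hlt⟩
    exact ⟨⟨k + 1, h⟩, rfl, hlt⟩
  · rintro ⟨l, hkl, hlt⟩
    have hk : (k : ℕ) + 1 < n := hkl ▸ l.isLt
    obtain rfl : ⟨k + 1, hk⟩ = l := Fin.ext hkl
    exact ⟨hk, hlt⟩

theorem recoilSet_mul_eq_iff :
    recoilSet (σ * τ) = recoilSet σ ↔
      ∀ p q, σ p ⋖ σ q → (τ⁻¹ q < τ⁻¹ p ↔ q < p) := by
  have mem_iff_of_covBy (ρ : Perm (Fin n)) {k l : Fin n} (hkl : k ⋖ l) :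
      k ∈ recoilSet ρ ↔ ρ⁻¹ l < ρ⁻¹ k :=
    mem_recoilSet_s13.trans
      ⟨fun ⟨_, hkm, hlt⟩ => hkl.unique_right hkm ▸ hlt, fun hlt => ⟨l, hkl, hlt⟩⟩
  constructor
  · intro h p q hpq
    simpa [mem_iff_of_covBy _ hpq] using Finset.ext_iff.1 h (σ p)
  · intro h
    ext k
    simp only [mem_recoilSet_s13]
    refine exists_congr fun l => and_congr_right fun hkl => ?_
    simpa using h (σ⁻¹ k) (σ⁻¹ l) (by simpa using hkl)

theorem recoilSet_mul_eq_of_mem_fixingSubgroup_compl [S.OrdConnected]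
    (hσ : ∀ p ∈ S, ∀ q ∈ S, ¬σ p ⋖ σ q) (hτ : τ ∈ fixingSubgroup (Perm (Fin n)) Sᶜ) :
    recoilSet (σ * τ) = recoilSet σ :=
  recoilSet_mul_eq_iff.2 fun p q hpq =>
    apply_lt_apply_iff_of_mem_fixingSubgroup_compl (inv_mem hτ) fun ⟨hq, hp⟩ => hσ p hp q hq hpq

theorem not_covBy_of_recoilSet_mul_eq_of_strictAntiOn (hτ : StrictAntiOn ⇑τ⁻¹ S)
    (h : recoilSet (σ * τ) = recoilSet σ) : ∀ p ∈ S, ∀ q ∈ S, ¬σ p ⋖ σ q := by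
  intro p hp q hq hpq
  have order_reversed : p < q ↔ q < p :=
    (hτ.lt_iff_gt hq hp).symm.trans (recoilSet_mul_eq_iff.1 h p q hpq)
  have hne : p ≠ q := fun e => hpq.ne (congrArg σ e)
  rcases hne.lt_or_gt with hlt | hgt
  · exact hlt.asymm (order_reversed.1 hlt)
  · exact hgt.asymm (order_reversed.2 hgt)

theorem two_le_abs_sub_iff_not_covBy {k l : Fin n} (hkl : k ≠ l) :
    2 ≤ |((k : ℕ) : ℤ) - ((l : ℕ) : ℤ)| ↔ ¬k ⋖ l ∧ ¬l ⋖ k := by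
  have hval : (k : ℕ) ≠ l := Fin.val_ne_of_ne hkl
  simp only [Fin.covBy_iff, Nat.covBy_iff_add_one_eq, le_abs]
  omega

theorem forall_mem_triple_not_covBy_iff {a b c : Fin n} (hab : a ≠ b) (hbc : b ≠ c) (hac : a ≠ c) :
    (∀ p ∈ ({a, b, c} : Set (Fin n)), ∀ q ∈ ({a, b, c} : Set (Fin n)), ¬σ p ⋖ σ q) ↔
      2 ≤ |((σ a : ℕ) : ℤ) - ((σ b : ℕ) : ℤ)| ∧
      2 ≤ |((σ b : ℕ) : ℤ) - ((σ c : ℕ) : ℤ)| ∧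
      2 ≤ |((σ a : ℕ) : ℤ) - ((σ c : ℕ) : ℤ)| := by
  have not_covBy_self (k : Fin n) : ¬k ⋖ k := fun h => h.ne rfl
  simp only [two_le_abs_sub_iff_not_covBy (σ.injective.ne hab),
    two_le_abs_sub_iff_not_covBy (σ.injective.ne hbc),
    two_le_abs_sub_iff_not_covBy (σ.injective.ne hac), Set.mem_insert_iff,
    Set.mem_singleton_iff, forall_eq_or_imp, forall_eq, not_covBy_self]
  tauto

end Recoil

/-- The six permutations `σ, σs_i, σs_is_{i+1}, σs_is_{i+1}s_i, σs_{i+1}s_i, σs_{i+1}` all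
have the same recoil set iff `|σ(i)−σ(i+1)| ≥ 2`, `|σ(i+1)−σ(i+2)| ≥ 2` and
`|σ(i)−σ(i+2)| ≥ 2`. -/
theorem statement13 (n : ℕ) (hn : 0 < n) (σ : Equiv.Perm (Fin n)) (i : ℕ)
    (hi : i + 2 < n) :
    let s₁ : Equiv.Perm (Fin n) := Equiv.swap ⟨i, by omega⟩ ⟨i + 1, by omega⟩
    let s₂ : Equiv.Perm (Fin n) := Equiv.swap ⟨i + 1, by omega⟩ ⟨i + 2, hi⟩
    (recoilSet (σ * s₁) = recoilSet σ ∧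
     recoilSet (σ * s₁ * s₂) = recoilSet σ ∧
     recoilSet (σ * s₁ * s₂ * s₁) = recoilSet σ ∧
     recoilSet (σ * s₂ * s₁) = recoilSet σ ∧
     recoilSet (σ * s₂) = recoilSet σ) ↔
    (2 ≤ |((σ ⟨i, by omega⟩ : ℕ) : ℤ) - ((σ ⟨i + 1, by omega⟩ : ℕ) : ℤ)| ∧
     2 ≤ |((σ ⟨i + 1, by omega⟩ : ℕ) : ℤ) - ((σ ⟨i + 2, hi⟩ : ℕ) : ℤ)| ∧
     2 ≤ |((σ ⟨i, by omega⟩ : ℕ) : ℤ) - ((σ ⟨i + 2, hi⟩ : ℕ) : ℤ)|) := by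
  set a : Fin n := ⟨i, by omega⟩
  set b : Fin n := ⟨i + 1, by omega⟩
  set c : Fin n := ⟨i + 2, hi⟩
  intro s₁ s₂
  have hab : a ⋖ b := Fin.covBy_iff.2 (Order.covBy_add_one i)
  have hbc : b ⋖ c := Fin.covBy_iff.2 (Order.covBy_add_one (i + 1))
  have hac : a < c := hab.lt.trans hbc.lt
  have := ordConnected_triple hab hbc
  have hs₁ : s₁ ∈ fixingSubgroup (Perm (Fin n)) {a, b, c}ᶜ :=
    swap_mem_fixingSubgroup_compl (by simp) (by simp)
  have hs₂ : s₂ ∈ fixingSubgroup (Perm (Fin n)) {a, b, c}ᶜ :=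
    swap_mem_fixingSubgroup_compl (by simp) (by simp)
  have reversal : s₁ * s₂ * s₁ = swap a c := by
    simpa only [s₁, s₂, swap_comm] using swap_mul_swap_mul_swap hbc.ne' hac.ne'
  rw [← forall_mem_triple_not_covBy_iff hab.ne hbc.ne hac.ne]
  simp only [mul_assoc σ]
  refine ⟨fun ⟨_, _, h, _⟩ => ?_, fun hσ => ?_⟩
  · rw [reversal] at h
    exact not_covBy_of_recoilSet_mul_eq_of_strictAntiOn
      (by simpa only [swap_inv] using strictAntiOn_swap_triple hab.lt hbc.lt) h
  · have unchanged {τ} := recoilSet_mul_eq_of_mem_fixingSubgroup_compl (τ := τ) hσ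
    exact ⟨unchanged hs₁, unchanged (mul_mem hs₁ hs₂), unchanged (mul_mem (mul_mem hs₁ hs₂) hs₁),
      unchanged (mul_mem hs₂ hs₁), unchanged hs₂⟩
end
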